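/- Let α, β, γ be real numbers with α > -1/2, α + β + γ > -3/2, and γ > −1/2. Define, for t ≥ 1, F(t) = ∫₀¹ s^{2α} (∫ₛ¹ u^β (u−s)^γ du) (∫ₜ^{t+1} v^β (v−s)^γ dv) ds, V(t) = ∫₀^{t+1} s^{2α} (∫_{max(s,t)}^{t+1} u^β (u−s)^γ du)² ds, C = ∫₀¹ s^{2α} (∫ₛ¹ u^β (u−s)^γ du)² ds, and r(t) = F(t) / (√C · √V(t)). Then there exists a constant c > 0 (depending on α, β, γ) such that lim_{t→+∞} t^{α+1/2} r(t) = c. -/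

import Mathlib

open MeasureTheory Filter intervalIntegral

/-!
Write `K t s = ∫ v in t..(t+1), v ^ β * (v - s) ^ γ`. In the variable `x = s / t`, the quantity
`t ^ (-(β + γ)) * K t (t * x)` is the average of `v ^ β * (v - x) ^ γ` over `[1, 1 + 1 / t]`, so it
tends to `(1 - x) ^ γ`. For the covariance `s` stays bounded, hence `x → 0` and `F t` is asymptotic
to `t ^ (β + γ)` times `∫ s in 0..1, s ^ (2 * α) * ∫ u in s..1, u ^ β * (u - s) ^ γ`. For the
variance, the noise on `[0, t]` contributes `t ^ (2 * (α + β + γ) + 1)` times a quantity tending to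
the Beta integral of `x ^ (2 * α) * (1 - x) ^ (2 * γ)`, which is finite because `γ > -1/2`. The
noise on `[t, t + 1]` contributes only `O(t ^ (2 * (α + β)))`, which is negligible for the same
reason.
-/

section RealPowers

lemma rpow_le_rpow_add_rpow {a b z : ℝ} (p : ℝ) (ha : 0 < a) (haz : a ≤ z) (hzb : z ≤ b) :
    z ^ p ≤ a ^ p + b ^ p := by
  have hz : 0 < z := ha.trans_le haz
  have hap : 0 ≤ a ^ p := by positivity
  have hbp : 0 ≤ b ^ p := Real.rpow_nonneg (hz.le.trans hzb) p
  rcases le_total 0 p with hp | hp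
  · linarith [Real.rpow_le_rpow hz.le hzb hp]
  · linarith [Real.rpow_le_rpow_of_nonpos ha haz hp]

lemma rpow_le_mul_rpow_of_le_two_mul {t u : ℝ} (p : ℝ) (ht : 0 < t) (htu : t ≤ u)
    (hut : u ≤ 2 * t) : u ^ p ≤ (1 + 2 ^ p) * t ^ p :=
  calc u ^ p ≤ t ^ p + (2 * t) ^ p := rpow_le_rpow_add_rpow p ht htu hut
    _ = (1 + 2 ^ p) * t ^ p := by rw [Real.mul_rpow zero_le_two ht.le]; ring

lemma ae_mem_uIoc_imp_of_forall_mem_Ioo {a b : ℝ} (hab : a ≤ b) {p : ℝ → Prop}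
    (h : ∀ x ∈ Set.Ioo a b, p x) : ∀ᵐ x, x ∈ Set.uIoc a b → p x := by
  filter_upwards [Measure.ae_ne volume b] with x hxb hx
  rw [Set.uIoc_of_le hab] at hx
  exact h x ⟨hx.1, lt_of_le_of_ne hx.2 hxb⟩

lemma intervalIntegrable_rpow_mul_one_sub_rpow {a b : ℝ} (ha : -1 < a) (hb : -1 < b) :
    IntervalIntegrable (fun x : ℝ => x ^ a * (1 - x) ^ b) volume 0 1 := by
  have left : IntervalIntegrable (fun x : ℝ => x ^ a * (1 - x) ^ b) volume 0 (1 / 2) := by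
    refine (intervalIntegrable_rpow' ha).mul_continuousOn fun x hx => ?_
    rw [Set.uIcc_of_le (by norm_num)] at hx
    exact ((continuousAt_const.sub continuousAt_id).rpow_const
      (Or.inl (show 1 - x ≠ 0 by linarith [hx.2]))).continuousWithinAt
  have right : IntervalIntegrable (fun x : ℝ => x ^ a * (1 - x) ^ b) volume (1 / 2) 1 := by
    have h : IntervalIntegrable (fun x : ℝ => (1 - x) ^ b) volume (1 / 2) 1 := by
      simpa [show (1 : ℝ) - 2⁻¹ = 2⁻¹ by norm_num] using
        (intervalIntegrable_rpow' (a := 1 / 2) (b := 0) hb).comp_sub_left 1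
    refine h.continuousOn_mul fun x hx => ?_
    rw [Set.uIcc_of_le (by norm_num)] at hx
    exact (Real.continuousAt_rpow_const _ _ (Or.inl (by linarith [hx.1]))).continuousWithinAt
  exact left.trans right

lemma integral_rpow_mul_one_sub_rpow_pos {a b : ℝ} (ha : -1 < a) (hb : -1 < b) :
    0 < ∫ x in (0 : ℝ)..1, x ^ a * (1 - x) ^ b :=
  intervalIntegral_pos_of_pos_on (intervalIntegrable_rpow_mul_one_sub_rpow ha hb)
    (fun _ hx => mul_pos (Real.rpow_pos_of_pos hx.1 _)
      (Real.rpow_pos_of_pos (sub_pos.2 hx.2) _)) one_pos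

lemma intervalIntegrable_rpow_mul_one_sub_rpow_add_sq {a γ : ℝ} (ha : -1 < a)
    (hγ : -(1 / 2) < γ) (c : ℝ) :
    IntervalIntegrable (fun x : ℝ => x ^ a * ((1 - x) ^ γ + c) ^ 2) volume 0 1 := by
  have square := intervalIntegrable_rpow_mul_one_sub_rpow (b := 2 * γ) ha (by linarith)
  have cross := intervalIntegrable_rpow_mul_one_sub_rpow (b := γ) ha (by linarith)
  refine ((square.add (cross.const_mul (2 * c))).add
    ((intervalIntegrable_rpow' ha).const_mul (c ^ 2))).congr fun x hx => ?_
  rw [Set.uIoc_of_le zero_le_one] at hx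
  have h : (1 - x) ^ (2 * γ) = ((1 - x) ^ γ) ^ 2 := by
    rw [mul_comm]; exact Real.rpow_mul_natCast (by linarith [hx.2]) γ 2
  simp only [h]
  ring

lemma intervalIntegrable_sub_rpow (a b s : ℝ) {p : ℝ} (hp : -1 < p) :
    IntervalIntegrable (fun u => (u - s) ^ p) volume a b := by
  simpa using (intervalIntegrable_rpow' (a := a - s) (b := b - s) hp).comp_sub_right s

lemma integral_sub_rpow (s b : ℝ) {p : ℝ} (hp : -1 < p) :
    ∫ u in s..b, (u - s) ^ p = (b - s) ^ (p + 1) / (p + 1) := by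
  rw [integral_comp_sub_right (fun x => x ^ p) s, integral_rpow (Or.inl hp), sub_self,
    Real.zero_rpow (by linarith), sub_zero]

lemma tendsto_rpow_mul_div_sqrt {F V : ℝ → ℝ} {A B p q : ℝ} (hB : 0 < B)
    (hF : Tendsto (fun t : ℝ => t ^ (-p) * F t) atTop (nhds A))
    (hV : Tendsto (fun t : ℝ => t ^ (-q) * V t) atTop (nhds B)) :
    Tendsto (fun t : ℝ => t ^ (q / 2 - p) * (F t / √(V t))) atTop (nhds (A / √B)) := by
  refine (hF.div hV.sqrt (Real.sqrt_pos.2 hB).ne').congr' ?_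
  filter_upwards [eventually_gt_atTop 0] with t ht
  have hq : √(t ^ (-q)) = t ^ (-(q / 2)) := by
    rw [Real.sqrt_eq_rpow, ← Real.rpow_mul ht.le]; ring_nf
  have hpq : t ^ (q / 2 - p) = t ^ (-p) / t ^ (-(q / 2)) := by
    rw [← Real.rpow_sub ht]; ring_nf
  rw [Pi.div_apply, Real.sqrt_mul (by positivity), hq, hpq, mul_div_mul_comm]

end RealPowers

section KernelIntegral

/-- The Volterra kernel `u ^ β * (u - s) ^ γ`, integrated over `u ∈ [a, b]`. -/
noncomputable def kernelIntegral (β γ a b s : ℝ) : ℝ :=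
  ∫ u in a..b, u ^ β * (u - s) ^ γ

variable {β γ : ℝ}

@[fun_prop]
lemma measurable_kernelIntegral {Ω : Type*} [MeasurableSpace Ω] {a b s : Ω → ℝ}
    (ha : Measurable a) (hb : Measurable b) (hs : Measurable s) :
    Measurable fun ω => kernelIntegral β γ (a ω) (b ω) (s ω) := by
  have integral_Ioc : ∀ {a b : Ω → ℝ}, Measurable a → Measurable b →
      Measurable fun ω => ∫ u in Set.Ioc (a ω) (b ω), u ^ β * (u - s ω) ^ γ := by
    intro a b ha hb
    simp_rw [← MeasureTheory.integral_indicator measurableSet_Ioc]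
    refine (StronglyMeasurable.integral_prod_right' (ν := volume)
      (f := {p : Ω × ℝ | p.2 ∈ Set.Ioc (a p.1) (b p.1)}.indicator
        fun p => p.2 ^ β * (p.2 - s p.1) ^ γ)
      (Measurable.indicator (by fun_prop) ?_).stronglyMeasurable).measurable
    exact (measurableSet_lt (by fun_prop) measurable_snd).inter
      (measurableSet_le measurable_snd (by fun_prop))
  exact (integral_Ioc ha hb).sub (integral_Ioc hb ha)

lemma kernelIntegral_pos {a b s : ℝ} (hγ : -1 < γ) (hs : 0 < s) (hsa : s ≤ a) (hab : a < b) :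
    0 < kernelIntegral β γ a b s := by
  refine intervalIntegral_pos_of_pos_on ?_ (fun u hu => ?_) hab
  · refine (intervalIntegrable_sub_rpow a b s hγ).continuousOn_mul fun u hu => ?_
    rw [Set.uIcc_of_le hab.le] at hu
    exact (Real.continuousAt_rpow_const _ _ (Or.inl (by linarith [hu.1]))).continuousWithinAt
  · exact mul_pos (Real.rpow_pos_of_pos (by linarith [hu.1]) _)
      (Real.rpow_pos_of_pos (by linarith [hu.1]) _)

lemma abs_kernelIntegral_le_div {b s M η : ℝ} (hM : 0 ≤ M) (hη : 0 < η) (hs : 0 ≤ s)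
    (hsb : s ≤ b) (hbs : b ≤ s + 1)
    (h : ∀ u ∈ Set.Ioc s b, u ^ β * (u - s) ^ γ ≤ M * (u - s) ^ (η - 1)) :
    |kernelIntegral β γ s b s| ≤ M / η := by
  have hη' : -1 < η - 1 := by linarith
  calc |kernelIntegral β γ s b s| ≤ ∫ u in s..b, M * (u - s) ^ (η - 1) := by
        refine intervalIntegral.norm_integral_le_of_norm_le (μ := volume)
          (f := fun u => u ^ β * (u - s) ^ γ) hsb (ae_of_all _ fun u hu => ?_)
          ((intervalIntegrable_sub_rpow s b s hη').const_mul M)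
        have hu0 : 0 ≤ u := hs.trans hu.1.le
        have hus : 0 ≤ u - s := sub_nonneg.2 hu.1.le
        rw [Real.norm_of_nonneg (by positivity)]
        exact h u hu
    _ = M * ((b - s) ^ η / η) := by
        rw [intervalIntegral.integral_const_mul, integral_sub_rpow s b hη', sub_add_cancel]
    _ ≤ M * (1 / η) := by
        gcongr
        exact Real.rpow_le_one (by linarith) (by linarith) hη.le
    _ = M / η := mul_one_div M η

lemma rpow_mul_sub_rpow_le {θ η s u : ℝ} (hη : η ≤ γ + 1) (hθ : 0 ≤ θ)
    (hηθ : η ≤ β + γ + 1 + θ) (hs : 0 < s) (hsu : s < u) (hu : u ≤ 1) :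
    u ^ β * (u - s) ^ γ ≤ s ^ (-θ) * (u - s) ^ (η - 1) := by
  have hu0 : 0 < u := hs.trans hsu
  have hus : 0 < u - s := sub_pos.2 hsu
  calc u ^ β * (u - s) ^ γ
      = u ^ (-θ) * u ^ (β + θ) * ((u - s) ^ (γ + 1 - η) * (u - s) ^ (η - 1)) := by
        rw [← Real.rpow_add hu0, ← Real.rpow_add hus]; ring_nf
    _ ≤ s ^ (-θ) * u ^ (β + θ) * (u ^ (γ + 1 - η) * (u - s) ^ (η - 1)) := by
        gcongr ?_ * _ * (?_ * _)
        · exact Real.rpow_le_rpow_of_nonpos hs hsu.le (by linarith)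
        · exact Real.rpow_le_rpow hus.le (by linarith) (by linarith)
    _ = s ^ (-θ) * (u - s) ^ (η - 1) * u ^ (β + γ + 1 + θ - η) := by
        rw [show β + γ + 1 + θ - η = (β + θ) + (γ + 1 - η) by ring, Real.rpow_add hu0 (β + θ)]
        ring_nf
    _ ≤ s ^ (-θ) * (u - s) ^ (η - 1) :=
        mul_le_of_le_one_right (by positivity) (Real.rpow_le_one hu0.le hu (by linarith))

lemma exists_abs_kernelIntegral_one_le {θ : ℝ} (hγ : -1 < γ) (hθ : 0 ≤ θ)
    (hβγθ : -1 < β + γ + θ) :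
    ∃ M, ∀ s ∈ Set.Ioc (0 : ℝ) 1, |kernelIntegral β γ s 1 s| ≤ M * s ^ (-θ) := by
  set η := min (γ + 1) (β + γ + 1 + θ)
  have hη : 0 < η := lt_min (by linarith) (by linarith)
  refine ⟨1 / η, fun s hs => ?_⟩
  have hs0 : 0 < s := hs.1
  rw [one_div_mul_eq_div]
  exact abs_kernelIntegral_le_div (by positivity) hη hs0.le hs.2 (by linarith) fun u hu =>
    rpow_mul_sub_rpow_le (min_le_left _ _) hθ (min_le_right _ _) hs0 hu.1 hu.2

lemma intervalIntegrable_rpow_mul_kernelIntegral_one_pow {a : ℝ} {n : ℕ} (hn : 0 < n)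
    (ha : -1 < a) (hγ : -1 < γ) (haβγ : -1 < a + n * (β + γ + 1)) :
    IntervalIntegrable (fun s => s ^ a * kernelIntegral β γ s 1 s ^ n) volume 0 1 := by
  have hn' : (0 : ℝ) < n := by exact_mod_cast hn
  obtain ⟨θ, hθ, hnθ⟩ : ∃ θ, max 0 (-(β + γ + 1)) < θ ∧ θ < (a + 1) / n :=
    exists_between (max_lt (by positivity [show 0 < a + 1 by linarith])
      (by rw [lt_div_iff₀ hn']; linarith))
  rw [max_lt_iff] at hθ
  rw [lt_div_iff₀ hn'] at hnθ
  obtain ⟨M, hM⟩ := exists_abs_kernelIntegral_one_le (β := β) hγ hθ.1.le (by linarith)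
  have hmajorant : IntervalIntegrable (fun s : ℝ => M ^ n * s ^ (a - n * θ)) volume 0 1 :=
    (intervalIntegrable_rpow' (by linarith)).const_mul _
  refine hmajorant.mono_fun' (by fun_prop) ?_
  rw [Set.uIoc_of_le zero_le_one]
  refine (ae_restrict_iff' measurableSet_Ioc).2 (ae_of_all _ fun s hs => ?_)
  have hs0 : 0 < s := hs.1
  have hpow : (s ^ (-θ)) ^ n = s ^ (-(n * θ)) := by
    rw [← Real.rpow_mul_natCast hs0.le]; ring_nf
  calc ‖s ^ a * kernelIntegral β γ s 1 s ^ n‖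
      = s ^ a * |kernelIntegral β γ s 1 s| ^ n := by
        rw [norm_mul, norm_pow, Real.norm_of_nonneg (by positivity), Real.norm_eq_abs]
    _ ≤ s ^ a * (M * s ^ (-θ)) ^ n := by gcongr; exact hM s hs
    _ = M ^ n * s ^ (a - n * θ) := by
        rw [mul_pow, hpow, sub_eq_add_neg, Real.rpow_add hs0]; ring

lemma integral_rpow_mul_kernelIntegral_one_pow_pos {a : ℝ} {n : ℕ} (hn : 0 < n)
    (ha : -1 < a) (hγ : -1 < γ) (haβγ : -1 < a + n * (β + γ + 1)) :
    0 < ∫ s in (0 : ℝ)..1, s ^ a * kernelIntegral β γ s 1 s ^ n :=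
  intervalIntegral_pos_of_pos_on
    (intervalIntegrable_rpow_mul_kernelIntegral_one_pow hn ha hγ haβγ)
    (fun _ hs => mul_pos (Real.rpow_pos_of_pos hs.1 _)
      (pow_pos (kernelIntegral_pos hγ hs.1 le_rfl hs.2) n)) one_pos

end KernelIntegral

section RescaledKernel

/-- The kernel integral over `[t, t + 1]` in the scale-free variable `x = s / t`, divided by its
order of growth `t ^ (β + γ)`. -/
noncomputable def rescaledKernel (β γ t x : ℝ) : ℝ :=
  t ^ (-(β + γ)) * kernelIntegral β γ t (t + 1) (t * x)

variable {β γ : ℝ}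

@[fun_prop]
lemma measurable_rescaledKernel {Ω : Type*} [MeasurableSpace Ω] {t x : Ω → ℝ}
    (ht : Measurable t) (hx : Measurable x) :
    Measurable fun ω => rescaledKernel β γ (t ω) (x ω) := by
  unfold rescaledKernel
  fun_prop

lemma rpow_mul_kernelIntegral_eq_rescaledKernel {t : ℝ} (ht : t ≠ 0) (s : ℝ) :
    t ^ (-(β + γ)) * kernelIntegral β γ t (t + 1) s = rescaledKernel β γ t (s / t) := by
  rw [rescaledKernel, mul_div_cancel₀ s ht]

lemma rescaledKernel_eq_interval_average {t x : ℝ} (ht : 0 < t) (hx : x ≤ 1) :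
    rescaledKernel β γ t x = ⨍ v in 1..(1 + 1 / t), v ^ β * (v - x) ^ γ := by
  have hv : ∀ v ∈ Set.uIcc 1 (1 + 1 / t),
      (t * v) ^ β * (t * v - t * x) ^ γ = t ^ (β + γ) * (v ^ β * (v - x) ^ γ) := by
    intro v hv
    rw [Set.uIcc_of_le (by simp [ht.le])] at hv
    rw [← mul_sub, Real.mul_rpow ht.le (by linarith [hv.1]),
      Real.mul_rpow ht.le (by linarith [hv.1]), Real.rpow_add ht]
    ring
  have hsubst := mul_integral_comp_mul_left (a := 1) (b := 1 + 1 / t)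
    (f := fun u => u ^ β * (u - t * x) ^ γ) t
  rw [integral_congr hv, intervalIntegral.integral_const_mul, mul_one, mul_add, mul_one,
    mul_one_div_cancel ht.ne'] at hsubst
  rw [rescaledKernel, kernelIntegral, ← hsubst, interval_average_eq, add_sub_cancel_left,
    one_div, inv_inv, smul_eq_mul, Real.rpow_neg ht.le]
  field_simp

lemma exists_rescaledKernel_eq {t x : ℝ} (ht : 0 < t) (hx : x < 1) :
    ∃ y ∈ Set.Icc 1 (1 + 1 / t), rescaledKernel β γ t x = y ^ β * (y - x) ^ γ := by
  have ht' : 1 < 1 + 1 / t := by simp [ht]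
  have hcont : ContinuousOn (fun v : ℝ => v ^ β * (v - x) ^ γ) (Set.uIcc 1 (1 + 1 / t)) := by
    intro v hv
    rw [Set.uIcc_of_le ht'.le] at hv
    exact ((continuousAt_id.rpow_const (Or.inl (show v ≠ 0 by linarith [hv.1]))).mul
      ((continuousAt_id.sub continuousAt_const).rpow_const
        (Or.inl (show v - x ≠ 0 by linarith [hv.1])))).continuousWithinAt
  obtain ⟨y, hy, heq⟩ := exists_eq_interval_average ht'.ne hcont
  rw [Set.uIoo_of_le ht'.le] at hy
  exact ⟨y, Set.Ioo_subset_Icc_self hy,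
    (rescaledKernel_eq_interval_average ht hx.le).trans heq.symm⟩

lemma tendsto_rescaledKernel {ξ : ℝ → ℝ} {x : ℝ} (hx : x < 1)
    (hξ : Tendsto ξ atTop (nhds x)) :
    Tendsto (fun t => rescaledKernel β γ t (ξ t)) atTop (nhds ((1 - x) ^ γ)) := by
  have hmean : ∀ᶠ t in atTop, ∃ y ∈ Set.Icc 1 (1 + 1 / t),
      rescaledKernel β γ t (ξ t) = y ^ β * (y - ξ t) ^ γ := by
    filter_upwards [eventually_gt_atTop 0, hξ.eventually_lt_const hx] with t ht hξt
      using exists_rescaledKernel_eq ht hξt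
  obtain ⟨y, hy⟩ := hmean.choice
  have hy1 : Tendsto y atTop (nhds 1) := by
    have hupper : Tendsto (fun t : ℝ => 1 + 1 / t) atTop (nhds 1) := by
      simpa using (tendsto_inv_atTop_zero (𝕜 := ℝ)).const_add 1
    exact tendsto_of_tendsto_of_tendsto_of_le_of_le' tendsto_const_nhds hupper
      (hy.mono fun t h => h.1.1) (hy.mono fun t h => h.1.2)
  have hlim : Tendsto (fun t => y t ^ β * (y t - ξ t) ^ γ) atTop
      (nhds (1 ^ β * (1 - x) ^ γ)) :=
    (hy1.rpow_const (Or.inl one_ne_zero)).mul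
      ((hy1.sub hξ).rpow_const (Or.inl (sub_pos.2 hx).ne'))
  rw [Real.one_rpow, one_mul] at hlim
  exact hlim.congr' (hy.mono fun t h => h.2.symm)

lemma abs_rescaledKernel_le {t x : ℝ} (ht : 1 ≤ t) (hx0 : 0 ≤ x) (hx1 : x < 1) :
    |rescaledKernel β γ t x| ≤ (1 + 2 ^ β) * ((1 - x) ^ γ + 2 ^ γ) := by
  obtain ⟨y, ⟨hy1, hyt⟩, hy⟩ := exists_rescaledKernel_eq (β := β) (γ := γ)
    (zero_lt_one.trans_le ht) hx1
  have hinv : 1 / t ≤ 1 := (div_le_one (by linarith)).2 ht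
  have hy2 : y ≤ 2 := by linarith
  have hyx : 0 ≤ y - x := by linarith
  have hyβ : y ^ β ≤ 1 + 2 ^ β := by
    simpa using rpow_le_rpow_add_rpow β one_pos hy1 hy2
  have hyγ : (y - x) ^ γ ≤ (1 - x) ^ γ + 2 ^ γ :=
    rpow_le_rpow_add_rpow γ (sub_pos.2 hx1) (by linarith) (by linarith)
  rw [hy, abs_of_nonneg (by positivity)]
  gcongr

lemma tendsto_integral_mul_rescaledKernel {g : ℝ → ℝ} {b : ℝ} (hb : 0 ≤ b)
    (hg : IntervalIntegrable g volume 0 b) :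
    Tendsto (fun t => ∫ s in 0..b, g s * rescaledKernel β γ t (s / t)) atTop
      (nhds (∫ s in 0..b, g s)) := by
  set M : ℝ := (1 + 2 ^ β) * ((1 / 2) ^ γ + 1 + 2 ^ γ)
  refine intervalIntegral.tendsto_integral_filter_of_dominated_convergence (fun s => ‖g s‖ * M)
    (Eventually.of_forall fun t => ?_) ?_ (hg.norm.mul_const M) (ae_of_all _ fun s _ => ?_)
  · exact (intervalIntegrable_iff.1 hg).aestronglyMeasurable.mul
      (Measurable.aestronglyMeasurable (by fun_prop))
  · filter_upwards [eventually_ge_atTop 1, eventually_ge_atTop (2 * b)] with t ht htb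
    refine ae_of_all _ fun s hs => ?_
    rw [Set.uIoc_of_le hb] at hs
    have hst0 : 0 ≤ s / t := div_nonneg hs.1.le (by linarith)
    have hst : s / t ≤ 1 / 2 := by rw [div_le_iff₀ (by linarith)]; linarith [hs.2]
    have hγ : (1 - s / t) ^ γ ≤ (1 / 2) ^ γ + 1 := by
      simpa using rpow_le_rpow_add_rpow (b := 1) γ one_half_pos
        (show 1 / 2 ≤ 1 - s / t by linarith) (by linarith)
    rw [norm_mul, Real.norm_eq_abs (rescaledKernel β γ t (s / t))]
    have hk : |rescaledKernel β γ t (s / t)| ≤ M :=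
      (abs_rescaledKernel_le ht hst0 (by linarith)).trans
        (mul_le_mul_of_nonneg_left (by linarith) (by positivity))
    gcongr
  · simpa using (tendsto_rescaledKernel (β := β) (γ := γ) zero_lt_one
      (tendsto_const_nhds.div_atTop tendsto_id)).const_mul (g s)

lemma norm_rpow_mul_rescaledKernel_sq_le {a t x : ℝ} (ht : 1 ≤ t) (hx0 : 0 ≤ x) (hx1 : x < 1) :
    ‖x ^ a * rescaledKernel β γ t x ^ 2‖ ≤
      (1 + 2 ^ β) ^ 2 * (x ^ a * ((1 - x) ^ γ + 2 ^ γ) ^ 2) :=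
  calc ‖x ^ a * rescaledKernel β γ t x ^ 2‖ = x ^ a * |rescaledKernel β γ t x| ^ 2 := by
        rw [Real.norm_of_nonneg (by positivity), sq_abs]
    _ ≤ x ^ a * ((1 + 2 ^ β) * ((1 - x) ^ γ + 2 ^ γ)) ^ 2 := by
        gcongr; exact abs_rescaledKernel_le ht hx0 hx1
    _ = (1 + 2 ^ β) ^ 2 * (x ^ a * ((1 - x) ^ γ + 2 ^ γ) ^ 2) := by ring

lemma intervalIntegrable_rpow_mul_rescaledKernel_sq {a t : ℝ} (ha : -1 < a)
    (hγ : -(1 / 2) < γ) (ht : 1 ≤ t) :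
    IntervalIntegrable (fun x => x ^ a * rescaledKernel β γ t x ^ 2) volume 0 1 :=
  ((intervalIntegrable_rpow_mul_one_sub_rpow_add_sq ha hγ (2 ^ γ)).const_mul
      ((1 + 2 ^ β) ^ 2)).mono_fun' (by fun_prop)
    ((ae_restrict_iff' measurableSet_uIoc).2 (ae_mem_uIoc_imp_of_forall_mem_Ioo zero_le_one
      fun _ hx => norm_rpow_mul_rescaledKernel_sq_le ht hx.1.le hx.2))

lemma tendsto_integral_rpow_mul_rescaledKernel_sq {a : ℝ} (ha : -1 < a) (hγ : -(1 / 2) < γ) :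
    Tendsto (fun t => ∫ x in (0 : ℝ)..1, x ^ a * rescaledKernel β γ t x ^ 2) atTop
      (nhds (∫ x in (0 : ℝ)..1, x ^ a * (1 - x) ^ (2 * γ))) := by
  refine intervalIntegral.tendsto_integral_filter_of_dominated_convergence _
    (Eventually.of_forall fun t => by fun_prop) ?_
    ((intervalIntegrable_rpow_mul_one_sub_rpow_add_sq ha hγ (2 ^ γ)).const_mul ((1 + 2 ^ β) ^ 2))
    (ae_mem_uIoc_imp_of_forall_mem_Ioo zero_le_one fun x hx => ?_)
  · filter_upwards [eventually_ge_atTop 1] with t ht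
    exact ae_mem_uIoc_imp_of_forall_mem_Ioo zero_le_one fun x hx =>
      norm_rpow_mul_rescaledKernel_sq_le ht hx.1.le hx.2
  · have h := ((tendsto_rescaledKernel (β := β) (γ := γ) hx.2 tendsto_const_nhds).pow
      2).const_mul (x ^ a)
    rwa [← Real.rpow_mul_natCast (by linarith [hx.2]), Nat.cast_ofNat, mul_comm γ 2] at h

end RescaledKernel

section Increments

/-- The covariance of `X₁` and `X_{t+1} - X_t` for the Gaussian Volterra process `X`
(`F t` in the theorem). -/
noncomputable def incrementCovariance (α β γ t : ℝ) : ℝ :=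
  ∫ s in (0 : ℝ)..1, s ^ (2 * α) * kernelIntegral β γ s 1 s * kernelIntegral β γ t (t + 1) s

/-- The variance of `X_{t+1} - X_t` for the Gaussian Volterra process `X` (`V t` in the
theorem). -/
noncomputable def incrementVariance (α β γ t : ℝ) : ℝ :=
  ∫ s in (0 : ℝ)..(t + 1), s ^ (2 * α) * kernelIntegral β γ (max s t) (t + 1) s ^ 2

variable {α β γ : ℝ}

lemma tendsto_rpow_mul_incrementCovariance (hα : -(1 / 2) < α) (hγ : -1 < γ)
    (hαβγ : -1 < 2 * α + (β + γ + 1)) :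
    Tendsto (fun t => t ^ (-(β + γ)) * incrementCovariance α β γ t) atTop
      (nhds (∫ s in (0 : ℝ)..1, s ^ (2 * α) * kernelIntegral β γ s 1 s)) := by
  have hg : IntervalIntegrable (fun s => s ^ (2 * α) * kernelIntegral β γ s 1 s) volume 0 1 := by
    simpa using intervalIntegrable_rpow_mul_kernelIntegral_one_pow one_pos
      (by linarith : -1 < 2 * α) hγ (by simpa using hαβγ)
  refine (tendsto_integral_mul_rescaledKernel (β := β) (γ := γ) zero_le_one hg).congr' ?_
  filter_upwards [eventually_ne_atTop 0] with t ht
  simp_rw [incrementCovariance, ← intervalIntegral.integral_const_mul,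
    ← rpow_mul_kernelIntegral_eq_rescaledKernel ht]
  exact integral_congr fun s _ => by ring

lemma rpow_mul_kernelIntegral_sq_comp_mul {a t x : ℝ} (ht : 0 < t) (hx : 0 ≤ x) :
    (t * x) ^ a * kernelIntegral β γ t (t + 1) (t * x) ^ 2 =
      t ^ (a + 2 * (β + γ)) * (x ^ a * rescaledKernel β γ t x ^ 2) := by
  have hpow : t ^ (2 * (β + γ)) = (t ^ (β + γ)) ^ 2 := by
    rw [mul_comm]; exact Real.rpow_mul_natCast ht.le _ 2
  rw [Real.mul_rpow ht.le hx, rescaledKernel, Real.rpow_add ht, hpow, Real.rpow_neg ht.le]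
  field_simp

lemma intervalIntegrable_rpow_mul_kernelIntegral_sq {a t : ℝ} (ha : -1 < a)
    (hγ : -(1 / 2) < γ) (ht : 1 ≤ t) :
    IntervalIntegrable (fun s => s ^ a * kernelIntegral β γ t (t + 1) s ^ 2) volume 0 t := by
  have ht0 : 0 < t := by linarith
  rw [← IntervalIntegrable.comp_mul_left_iff ht0.ne', zero_div, div_self ht0.ne']
  refine ((intervalIntegrable_rpow_mul_rescaledKernel_sq (β := β) ha hγ ht).const_mul
    (t ^ (a + 2 * (β + γ)))).congr fun x hx => ?_
  rw [Set.uIoc_of_le zero_le_one] at hx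
  exact (rpow_mul_kernelIntegral_sq_comp_mul ht0 hx.1.le).symm

lemma integral_rpow_mul_kernelIntegral_sq {a t : ℝ} (ht : 0 < t) :
    ∫ s in (0 : ℝ)..t, s ^ a * kernelIntegral β γ t (t + 1) s ^ 2 =
      t ^ (a + 2 * (β + γ) + 1) * ∫ x in (0 : ℝ)..1, x ^ a * rescaledKernel β γ t x ^ 2 := by
  have hsubst := mul_integral_comp_mul_left (a := 0) (b := 1)
    (f := fun s => s ^ a * kernelIntegral β γ t (t + 1) s ^ 2) t
  rw [mul_zero, mul_one] at hsubst
  rw [← hsubst, Real.rpow_add_one ht.ne', mul_comm _ t, mul_assoc,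
    ← intervalIntegral.integral_const_mul (t ^ (a + 2 * (β + γ)))]
  congr 1
  refine integral_congr fun x hx => ?_
  rw [Set.uIcc_of_le zero_le_one] at hx
  exact rpow_mul_kernelIntegral_sq_comp_mul ht hx.1

lemma norm_rpow_mul_kernelIntegral_sq_le {a t s : ℝ} (hγ : -1 < γ) (ht : 1 ≤ t)
    (hts : t ≤ s) (hst : s ≤ t + 1) :
    ‖s ^ a * kernelIntegral β γ s (t + 1) s ^ 2‖ ≤
      (1 + 2 ^ a) * ((1 + 2 ^ β) / (γ + 1)) ^ 2 * t ^ (a + 2 * β) := by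
  have ht0 : 0 < t := by linarith
  have hs0 : 0 < s := by linarith
  have hγ1 : 0 < γ + 1 := by linarith
  have hkernel : |kernelIntegral β γ s (t + 1) s| ≤ (1 + 2 ^ β) * t ^ β / (γ + 1) := by
    refine abs_kernelIntegral_le_div (by positivity) hγ1 hs0.le hst (by linarith) fun u hu => ?_
    have hus : 0 ≤ u - s := sub_nonneg.2 hu.1.le
    rw [add_sub_cancel_right]
    gcongr
    exact rpow_le_mul_rpow_of_le_two_mul β ht0 (by linarith [hu.1]) (by linarith [hu.2])
  have hpow : t ^ (a + 2 * β) = t ^ a * (t ^ β) ^ 2 := by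
    rw [Real.rpow_add ht0, mul_comm 2 β]; exact congrArg _ (Real.rpow_mul_natCast ht0.le β 2)
  calc ‖s ^ a * kernelIntegral β γ s (t + 1) s ^ 2‖
      = s ^ a * |kernelIntegral β γ s (t + 1) s| ^ 2 := by
        rw [Real.norm_of_nonneg (by positivity), sq_abs]
    _ ≤ (1 + 2 ^ a) * t ^ a * ((1 + 2 ^ β) * t ^ β / (γ + 1)) ^ 2 := by
        gcongr
        exact rpow_le_mul_rpow_of_le_two_mul a ht0 hts (by linarith)
    _ = (1 + 2 ^ a) * ((1 + 2 ^ β) / (γ + 1)) ^ 2 * t ^ (a + 2 * β) := by rw [hpow]; ring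

lemma intervalIntegrable_rpow_mul_kernelIntegral_self_sq {a t : ℝ} (hγ : -1 < γ) (ht : 1 ≤ t) :
    IntervalIntegrable (fun s => s ^ a * kernelIntegral β γ s (t + 1) s ^ 2) volume
      t (t + 1) := by
  refine (intervalIntegrable_const
    (c := (1 + 2 ^ a) * ((1 + 2 ^ β) / (γ + 1)) ^ 2 * t ^ (a + 2 * β))).mono_fun' (by fun_prop)
    ((ae_restrict_iff' measurableSet_uIoc).2 (ae_of_all _ fun s hs => ?_))
  rw [Set.uIoc_of_le (by linarith)] at hs
  exact norm_rpow_mul_kernelIntegral_sq_le hγ ht hs.1.le hs.2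

lemma norm_integral_rpow_mul_kernelIntegral_self_sq_le {a t : ℝ} (hγ : -1 < γ) (ht : 1 ≤ t) :
    ‖∫ s in t..(t + 1), s ^ a * kernelIntegral β γ s (t + 1) s ^ 2‖ ≤
      (1 + 2 ^ a) * ((1 + 2 ^ β) / (γ + 1)) ^ 2 * t ^ (a + 2 * β) := by
  have hbound : ∀ s ∈ Set.uIoc t (t + 1), ‖s ^ a * kernelIntegral β γ s (t + 1) s ^ 2‖ ≤
      (1 + 2 ^ a) * ((1 + 2 ^ β) / (γ + 1)) ^ 2 * t ^ (a + 2 * β) := fun s hs => by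
    rw [Set.uIoc_of_le (by linarith)] at hs
    exact norm_rpow_mul_kernelIntegral_sq_le hγ ht hs.1.le hs.2
  have h := intervalIntegral.norm_integral_le_of_norm_le_const hbound
  rwa [add_sub_cancel_left, abs_one, mul_one] at h

lemma tendsto_rpow_mul_integral_kernelIntegral_self_sq {a : ℝ} (hγ : -(1 / 2) < γ) :
    Tendsto (fun t : ℝ => t ^ (-(a + 2 * (β + γ) + 1)) *
      ∫ s in t..(t + 1), s ^ a * kernelIntegral β γ s (t + 1) s ^ 2) atTop (nhds 0) := by
  set M : ℝ := (1 + 2 ^ a) * ((1 + 2 ^ β) / (γ + 1)) ^ 2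
  have hdecay : Tendsto (fun t : ℝ => M * t ^ (-(2 * γ + 1))) atTop (nhds 0) := by
    simpa using (tendsto_rpow_neg_atTop (by linarith : 0 < 2 * γ + 1)).const_mul M
  refine squeeze_zero_norm' ?_ hdecay
  filter_upwards [eventually_ge_atTop 1] with t ht
  have ht0 : 0 < t := by linarith
  rw [norm_mul, Real.norm_of_nonneg (by positivity)]
  calc t ^ (-(a + 2 * (β + γ) + 1)) *
        ‖∫ s in t..(t + 1), s ^ a * kernelIntegral β γ s (t + 1) s ^ 2‖
      ≤ t ^ (-(a + 2 * (β + γ) + 1)) * (M * t ^ (a + 2 * β)) := by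
        gcongr
        exact norm_integral_rpow_mul_kernelIntegral_self_sq_le (by linarith) ht
    _ = M * t ^ (-(2 * γ + 1)) := by
        rw [mul_left_comm, ← Real.rpow_add ht0]; ring_nf

lemma incrementVariance_eq_add {t : ℝ} (hα : -(1 / 2) < α) (hγ : -(1 / 2) < γ) (ht : 1 ≤ t) :
    incrementVariance α β γ t =
      (∫ s in (0 : ℝ)..t, s ^ (2 * α) * kernelIntegral β γ t (t + 1) s ^ 2) +
        ∫ s in t..(t + 1), s ^ (2 * α) * kernelIntegral β γ s (t + 1) s ^ 2 := by
  have ht0 : 0 ≤ t := by linarith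
  have before : Set.EqOn (fun s => s ^ (2 * α) * kernelIntegral β γ t (t + 1) s ^ 2)
      (fun s => s ^ (2 * α) * kernelIntegral β γ (max s t) (t + 1) s ^ 2) (Set.uIcc 0 t) := by
    intro s hs
    rw [Set.uIcc_of_le ht0] at hs
    simp only [max_eq_right hs.2]
  have after : Set.EqOn (fun s => s ^ (2 * α) * kernelIntegral β γ s (t + 1) s ^ 2)
      (fun s => s ^ (2 * α) * kernelIntegral β γ (max s t) (t + 1) s ^ 2)
      (Set.uIcc t (t + 1)) := by
    intro s hs
    rw [Set.uIcc_of_le (by linarith)] at hs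
    simp only [max_eq_left hs.1]
  rw [integral_congr before, integral_congr after]
  exact (integral_add_adjacent_intervals
    ((intervalIntegrable_rpow_mul_kernelIntegral_sq (by linarith) hγ ht).congr
      (before.mono Set.uIoc_subset_uIcc))
    ((intervalIntegrable_rpow_mul_kernelIntegral_self_sq (by linarith) ht).congr
      (after.mono Set.uIoc_subset_uIcc))).symm

lemma tendsto_rpow_mul_incrementVariance (hα : -(1 / 2) < α) (hγ : -(1 / 2) < γ) :
    Tendsto (fun t => t ^ (-(2 * α + 2 * (β + γ) + 1)) * incrementVariance α β γ t) atTop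
      (nhds (∫ x in (0 : ℝ)..1, x ^ (2 * α) * (1 - x) ^ (2 * γ))) := by
  have hsum := (tendsto_integral_rpow_mul_rescaledKernel_sq (β := β)
    (by linarith : -1 < 2 * α) hγ).add
    (tendsto_rpow_mul_integral_kernelIntegral_self_sq (a := 2 * α) (β := β) hγ)
  rw [add_zero] at hsum
  refine hsum.congr' ?_
  filter_upwards [eventually_ge_atTop 1] with t ht
  have ht0 : 0 < t := by linarith
  rw [incrementVariance_eq_add hα hγ ht, integral_rpow_mul_kernelIntegral_sq ht0, mul_add (t ^ _),
    ← mul_assoc, ← Real.rpow_add ht0, neg_add_cancel, Real.rpow_zero, one_mul]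

end Increments

/-- Theorem 3.5, case `γ > -1/2`: asymptotics of the correlation
`corr(X₁, X_{t+1} - X_t)` of the Gaussian Volterra process. -/
theorem stmt_9 (α β γ : ℝ) (hα : -(1/2 : ℝ) < α)
    (hαβγ : -(3/2 : ℝ) < α + β + γ) (hγ' : -(1/2 : ℝ) < γ)
    (F V r : ℝ → ℝ) (C : ℝ)
    (hF : ∀ t : ℝ, F t = ∫ s in (0:ℝ)..1, s ^ (2*α) *
      (∫ u in s..1, u ^ β * (u - s) ^ γ) *
      (∫ v in t..(t+1), v ^ β * (v - s) ^ γ))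
    (hV : ∀ t : ℝ, V t = ∫ s in (0:ℝ)..(t+1), s ^ (2*α) *
      (∫ u in (max s t)..(t+1), u ^ β * (u - s) ^ γ) ^ 2)
    (hC : C = ∫ s in (0:ℝ)..1, s ^ (2*α) *
      (∫ u in s..1, u ^ β * (u - s) ^ γ) ^ 2)
    (hr : ∀ t : ℝ, r t = F t / (Real.sqrt C * Real.sqrt (V t))) :
    ∃ c : ℝ, 0 < c ∧
      Tendsto (fun t : ℝ => t ^ (α + 1/2) * r t) atTop (nhds c) := by
  have h2α : -1 < 2 * α := by linarith
  have hγ : -1 < γ := by linarith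
  obtain rfl : F = incrementCovariance α β γ := funext hF
  obtain rfl : V = incrementVariance α β γ := funext hV
  have hC0 : 0 < C := hC ▸ integral_rpow_mul_kernelIntegral_one_pow_pos two_pos h2α hγ
    (by push_cast; linarith)
  have hA0 : 0 < ∫ s in (0 : ℝ)..1, s ^ (2 * α) * kernelIntegral β γ s 1 s := by
    simpa using integral_rpow_mul_kernelIntegral_one_pow_pos one_pos h2α hγ
      (by push_cast; linarith)
  have hB0 := integral_rpow_mul_one_sub_rpow_pos h2α (by linarith : -1 < 2 * γ)
  refine ⟨_, div_pos (div_pos hA0 (Real.sqrt_pos.2 hB0)) (Real.sqrt_pos.2 hC0), ?_⟩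
  have hratio := tendsto_rpow_mul_div_sqrt hB0
    (tendsto_rpow_mul_incrementCovariance (β := β) hα hγ (by linarith))
    (tendsto_rpow_mul_incrementVariance (β := β) hα hγ')
  refine (hratio.div_const √C).congr fun t => ?_
  rw [hr, mul_comm √C, ← div_div, mul_div_assoc]
  ring_nf
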